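/- Let m be an integer. There exists an integer n with n ≠ m and n ≠ −m−3 such that L_n = L_m if and only if there exists a pair (x,y) ∈ ℤ² with xy(x+y) ≠ 0 such that λ := F_m(x,y) is positive and divides m²+3m+9. Moreover, such an integer n and such a solution (x,y) can be chosen so that N = m + (m²+3m+9)·x·y·(x+y)/F_m(x,y), where either N = n or N = −n−3, and this equation holds for exactly one of the two values n and −n−3. -/

import Mathlib

open Polynomial

/-- The cubic form `F_m(X,Y) = X³ − mX²Y − (m+3)XY² − Y³`. -/
def F (m x y : ℤ) : ℤ := x ^ 3 - m * x ^ 2 * y - (m + 3) * x * y ^ 2 - y ^ 3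

/-- The simplest cubic polynomial `f_m(X) = X³ − mX² − (m+3)X − 1` over `ℚ`. -/
noncomputable def f (m : ℤ) : ℚ[X] :=
  X ^ 3 - C (m : ℚ) * X ^ 2 - C ((m : ℚ) + 3) * X - 1

/-- The simplest cubic field `L_m`: the splitting field of `f_m` over `ℚ` inside a fixed
algebraic closure of `ℚ`. -/
noncomputable def L (m : ℤ) : IntermediateField ℚ (AlgebraicClosure ℚ) :=
  IntermediateField.adjoin ℚ ((f m).rootSet (AlgebraicClosure ℚ))

local notation "K" => AlgebraicClosure ℚ

lemma cubic_no_zero (a b c d x y : ℤ) (ha : Odd a) (hd : Odd d) (hbc : Odd (b + c))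
    (h : a * x ^ 3 + b * x ^ 2 * y + c * x * y ^ 2 + d * y ^ 3 = 0) : x = 0 ∧ y = 0 := by
  by_contra hne
  have hg : 0 < Int.gcd x y := by
    rw [Int.gcd_pos_iff]; tauto
  obtain ⟨x', y', hco, hx, hy⟩ := Int.exists_gcd_one hg
  have hg' : ((Int.gcd x y : ℕ) : ℤ) ≠ 0 := by exact_mod_cast hg.ne'
  set g : ℤ := ((Int.gcd x y : ℕ) : ℤ)
  have h' : a * x' ^ 3 + b * x' ^ 2 * y' + c * x' * y' ^ 2 + d * y' ^ 3 = 0 := by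
    have : g ^ 3 * (a * x' ^ 3 + b * x' ^ 2 * y' + c * x' * y' ^ 2 + d * y' ^ 3) = 0 := by
      rw [← h, hx, hy]; ring
    exact (mul_eq_zero.mp this).resolve_left (pow_ne_zero _ hg')
  have hE : Even (a * x' ^ 3 + b * x' ^ 2 * y' + c * x' * y' ^ 2 + d * y' ^ 3) := by
    rw [h']; exact Even.zero
  have hxy : Even x' ∧ Even y' := by
    simp only [Int.even_add, Int.even_mul, Int.even_pow, ← Int.not_even_iff_odd] at hE ha hd hbc ⊢
    by_cases h1 : Even x' <;> by_cases h2 : Even y' <;> simp only [h1, h2, ha, hd] at hE ⊢ <;> tauto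
  have h2 : (2 : ℤ) ∣ (Int.gcd x' y' : ℤ) := Int.dvd_coe_gcd hxy.1.two_dvd hxy.2.two_dvd
  rw [hco] at h2
  norm_num at h2

lemma F_zero {m x y : ℤ} (h : F m x y = 0) : x = 0 ∧ y = 0 := by
  apply cubic_no_zero 1 (-m) (-(m + 3)) (-1) x y odd_one (by decide)
    ⟨-m - 2, by ring⟩
  rw [← h]; unfold F; ring

lemma D_pos (m : ℤ) : 0 < m ^ 2 + 3 * m + 9 := by nlinarith [sq_nonneg (2 * m + 3)]

lemma G_zero {m x y : ℤ}
    (h : (-m - 3) * F m x y = m * F m x y + (m ^ 2 + 3 * m + 9) * x * y * (x + y)) :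
    x = 0 ∧ y = 0 := by
  apply cubic_no_zero (2 * m + 3) (9 - m ^ 2) (-m ^ 2 - 6 * m) (-(2 * m + 3)) x y
    ⟨m + 1, by ring⟩ ⟨-m - 2, by ring⟩ ⟨4 - m ^ 2 - 3 * m, by ring⟩
  unfold F at h; linear_combination -h

/-- `θ` is a root of `f m`. -/
def Rt (m : ℤ) (θ : K) : Prop := θ ^ 3 - m * θ ^ 2 - (m + 3) * θ - 1 = 0

lemma f_natDegree (m : ℤ) : (f m).natDegree = 3 := by
  unfold f
  compute_degree!

lemma mem_rootSet_iff (m : ℤ) (θ : K) : θ ∈ (f m).rootSet K ↔ Rt m θ := by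
  have h0 : f m ≠ 0 := by
    intro h; have := f_natDegree m; rw [h] at this; simp at this
  rw [Polynomial.mem_rootSet_of_ne h0]
  simp [f, Rt]

lemma exists_root (m : ℤ) : ∃ θ : K, Rt m θ := by
  have h : (f m).degree ≠ 0 := by
    intro h
    have h1 := f_natDegree m
    rw [Polynomial.natDegree_eq_of_degree_eq_some h] at h1
    norm_num at h1
  obtain ⟨θ, hθ⟩ := IsAlgClosed.exists_aeval_eq_zero K (f m) h
  refine ⟨θ, ?_⟩
  simpa [f, Rt] using hθ

lemma Rt.lin {m : ℤ} {θ : K} (h : Rt m θ) {a b : ℤ} (hab : (a : K) * θ = b) : a = 0 := by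
  refine (F_zero (m := m) (x := b) (y := a) ?_).2
  have : ((F m b a : ℤ) : K) = 0 := by
    unfold F Rt at *
    push_cast
    rw [← hab]
    linear_combination (a : K) ^ 3 * h
  exact_mod_cast this

lemma Rt.ne_zero {m : ℤ} {θ : K} (h : Rt m θ) : θ ≠ 0 := by
  rintro rfl; unfold Rt at h; norm_num at h

lemma Rt.ne_one {m : ℤ} {θ : K} (h : Rt m θ) : 1 + θ ≠ 0 := by
  intro h1
  have : θ = -1 := by linear_combination h1
  subst this; unfold Rt at h; 
  have : (1 : K) = 0 := by linear_combination h
  exact one_ne_zero this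

lemma Rt.conj {m : ℤ} {θ φ : K} (h : Rt m θ) (h' : Rt m φ) :
    φ = θ ∨ φ = -1 / (1 + θ) ∨ φ = -(1 + θ) / θ := by
  have h0 := h.ne_zero
  have h1 := h.ne_one
  have : (φ - θ) * ((φ * (1 + θ) + 1) * (φ * θ + 1 + θ)) = 0 := by
    unfold Rt at h h'
    linear_combination θ * (1 + θ) * h' - φ * (1 + φ) * h
  rcases mul_eq_zero.mp this with h | h
  · left; linear_combination h
  rcases mul_eq_zero.mp h with h | h
  · right; left; field_simp; linear_combination h
  · right; right; field_simp; linear_combination h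

lemma L_eq {m : ℤ} {θ : K} (h : Rt m θ) : L m = IntermediateField.adjoin ℚ {θ} := by
  have hθ := IntermediateField.mem_adjoin_simple_self ℚ θ
  apply le_antisymm
  · unfold L
    rw [IntermediateField.adjoin_le_iff]
    intro φ hφ
    rw [mem_rootSet_iff] at hφ
    rcases h.conj hφ with e | e | e <;> rw [e]
    · exact hθ
    · exact div_mem (neg_mem (one_mem _)) (add_mem (one_mem _) hθ)
    · exact div_mem (neg_mem (add_mem (one_mem _) hθ)) hθ
  · rw [IntermediateField.adjoin_simple_le_iff]
    exact IntermediateField.subset_adjoin _ _ ((mem_rootSet_iff m θ).2 h)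

lemma key_id (m N x y θ : K) (h : θ ^ 3 - m * θ ^ 2 - (m + 3) * θ - 1 = 0) :
    (y * θ - x) ^ 3 - N * (y * θ - x) ^ 2 * (x * θ + x + y)
      - (N + 3) * (y * θ - x) * (x * θ + x + y) ^ 2 - (x * θ + x + y) ^ 3
    = -(m * (x ^ 3 - m * x ^ 2 * y - (m + 3) * x * y ^ 2 - y ^ 3)
       + (m ^ 2 + 3 * m + 9) * x * y * (x + y)
       - N * (x ^ 3 - m * x ^ 2 * y - (m + 3) * x * y ^ 2 - y ^ 3)) * (θ * (1 + θ)) := by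
  linear_combination (y ^ 3 - N * y ^ 2 * x - (N + 3) * y * x ^ 2 - x ^ 3) * h

lemma L_eq_of_sol {m N x y : ℤ} (hx : x ≠ 0)
    (h : N * F m x y = m * F m x y + (m ^ 2 + 3 * m + 9) * x * y * (x + y)) : L N = L m := by
  obtain ⟨θ, hθ⟩ := exists_root m
  have hs : (x : K) * θ + x + y ≠ 0 := by
    intro hs
    apply hx
    apply hθ.lin (b := -(x + y))
    push_cast; linear_combination hs
  have hK : (N : K) * (x ^ 3 - m * x ^ 2 * y - (m + 3) * x * y ^ 2 - y ^ 3)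
      = m * (x ^ 3 - m * x ^ 2 * y - (m + 3) * x * y ^ 2 - y ^ 3)
        + (m ^ 2 + 3 * m + 9) * x * y * (x + y) := by
    unfold F at h; exact_mod_cast h
  have hid := key_id m N x y θ hθ
  set s : K := (x : K) * θ + x + y with hsdef
  set w : K := ((y : K) * θ - x) / s with hw
  have hws : w * s = (y : K) * θ - x := by rw [hw]; field_simp
  have hwR : Rt N w := by
    have : s ^ 3 * (w ^ 3 - N * w ^ 2 - (N + 3) * w - 1) = 0 := by
      rw [← hws] at hid
      linear_combination hid + θ * (1 + θ) * hK
    exact (mul_eq_zero.mp this).resolve_left (pow_ne_zero _ hs)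
  -- inverse
  have hd : (y : K) - x * w ≠ 0 := by
    intro hd
    apply hx
    apply hwR.lin (b := y)
    linear_combination -hd
  have hθw : θ = ((x + y : K) * w + x) / (y - x * w) := by
    rw [eq_div_iff hd]
    rw [hsdef] at hws
    linear_combination -hws
  have hint : ∀ (E : IntermediateField ℚ K) (a : ℤ), (a : K) ∈ E := fun E a => intCast_mem E a
  rw [L_eq hθ, L_eq hwR]
  apply le_antisymm <;> rw [IntermediateField.adjoin_simple_le_iff]
  · have hm := IntermediateField.mem_adjoin_simple_self ℚ θ
    exact div_mem (sub_mem (mul_mem (hint _ _) hm) (hint _ _))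
      (add_mem (add_mem (mul_mem (hint _ _) hm) (hint _ _)) (hint _ _))
  · have hm := IntermediateField.mem_adjoin_simple_self ℚ w
    rw [hθw]
    exact div_mem (add_mem (mul_mem (add_mem (hint _ _) (hint _ _)) hm) (hint _ _))
      (sub_mem (hint _ _) (mul_mem (hint _ _) hm))

lemma eq_on_adjoin {θ t : K} (ρ τ : K ≃ₐ[ℚ] K) (h : ρ θ = τ θ)
    (ht : t ∈ IntermediateField.adjoin ℚ {θ}) : ρ t = τ t := by
  induction ht using IntermediateField.adjoin_induction with
  | mem x hx => rw [Set.mem_singleton_iff.mp hx, h]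
  | algebraMap x => simp
  | add x y _ _ hx hy => simp [hx, hy]
  | inv x _ hx => simp [hx]
  | mul x y _ _ hx hy => simp [hx, hy]

lemma Rt.map {m : ℤ} {θ : K} (h : Rt m θ) (ρ : K ≃ₐ[ℚ] K) : Rt m (ρ θ) := by
  unfold Rt at *
  have := congrArg ρ h
  have h3 : ρ 3 = 3 := map_ofNat ρ 3
  simpa [h3] using this

lemma rat_of_fixed {t : K} (h : ∀ ρ : K ≃ₐ[ℚ] K, ρ t = t) :
    ∃ p q : ℤ, q ≠ 0 ∧ IsCoprime p q ∧ (q : K) * t = p := by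
  have hb : t ∈ (⊥ : IntermediateField ℚ K) := by
    have : IsAlgClosure ℚ K := by
      convert (⟨inferInstance, AlgebraicClosure.isAlgebraic ℚ⟩ :
        @IsAlgClosure ℚ K _ _ (@AlgebraicClosure.instAlgebra ℚ _ ℚ _ (Algebra.id ℚ)) _)
      exact Subsingleton.elim _ _
    exact (InfiniteGalois.mem_bot_iff_fixed t).mpr h
  obtain ⟨r, hr⟩ := IntermediateField.mem_bot.mp hb
  refine ⟨r.num, r.den, by exact_mod_cast r.den_ne_zero, ?_, ?_⟩
  · rw [Int.isCoprime_iff_nat_coprime]; simpa using r.reduced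
  · have h1 : (r.den : ℚ) * r = r.num := Rat.den_mul_eq_num r
    have h2 := congrArg (algebraMap ℚ K) h1
    rw [← hr]
    rw [map_mul, map_natCast, map_intCast] at h2
    exact_mod_cast h2

lemma sig_sig {θ : K} (h0 : θ ≠ 0) (h1 : 1 + θ ≠ 0) :
    -(1 + (-(1 + θ) / θ)) / (-(1 + θ) / θ) = -1 / (1 + θ) := by
  have : -(1 + θ) ≠ 0 := neg_ne_zero.mpr h1
  have e : 1 + (-(1 + θ) / θ) = -1 / θ := by field_simp; ring
  rw [e]
  field_simp

lemma sig_sig' {θ : K} (h0 : θ ≠ 0) (h1 : 1 + θ ≠ 0) :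
    -1 / (1 + (-1 / (1 + θ))) = -(1 + θ) / θ := by
  have e : 1 + (-1 / (1 + θ)) = θ / (1 + θ) := by field_simp; ring
  rw [e]
  field_simp

lemma exists_tau {m : ℤ} {θ : K} (h : Rt m θ) : ∃ τ : K ≃ₐ[ℚ] K, τ θ = -1 / (1 + θ) := by
  by_contra hno
  push Not at hno
  have hfix : ∀ ρ : K ≃ₐ[ℚ] K, ρ θ = θ := by
    intro ρ
    rcases h.conj (h.map ρ) with e | e | e
    · exact e
    · exact absurd e (hno ρ)
    · refine absurd ?_ (hno (ρ.trans ρ))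
      rw [AlgEquiv.trans_apply, e, map_div₀, map_neg, map_add, map_one, e]
      exact sig_sig h.ne_zero h.ne_one
  obtain ⟨p, q, hq, -, hpq⟩ := rat_of_fixed hfix
  exact hq (h.lin hpq)

lemma sig_ne {m : ℤ} {θ : K} (h : Rt m θ) : -1 / (1 + θ) ≠ θ := by
  intro e
  rw [div_eq_iff h.ne_one] at e
  have e' : θ ^ 2 + θ + 1 = 0 := by linear_combination -e
  have e2 : (3 : ℤ) * θ = (m : ℤ) := by
    unfold Rt at h
    push_cast
    linear_combination -h + (θ - m - 1) * e'
  exact absurd (h.lin e2) (by norm_num)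

/-- The core of the forward direction. -/
lemma core {m N : ℤ} {θ w : K} (hθ : Rt m θ) (hw : Rt N w) (hNm : N ≠ m)
    (hmem : w ∈ IntermediateField.adjoin ℚ {θ}) (τ : K ≃ₐ[ℚ] K) (hτ : τ θ = -1 / (1 + θ))
    (hτw : τ w = -1 / (1 + w)) :
    ∃ x y : ℤ, x * y * (x + y) ≠ 0 ∧ 0 < F m x y ∧ F m x y ∣ m ^ 2 + 3 * m + 9 ∧
      N * F m x y = m * F m x y + (m ^ 2 + 3 * m + 9) * x * y * (x + y) := by
  have h0 := hθ.ne_zero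
  have h1 := hθ.ne_one
  have w0 := hw.ne_zero
  have w1 := hw.ne_one
  have hne : θ - w ≠ 0 := by
    intro e
    have e' : w = θ := by linear_combination -e
    subst e'
    have : ((N : K) - m) * (w * (1 + w)) = 0 := by
      unfold Rt at hθ hw; linear_combination hθ - hw
    rcases mul_eq_zero.mp this with h | h
    · apply hNm; exact_mod_cast sub_eq_zero.mp h
    · exact mul_ne_zero w0 w1 h
  set t : K := (w * θ + w + 1) / (θ - w) with ht
  have hθm := IntermediateField.mem_adjoin_simple_self ℚ θ
  have htm : t ∈ IntermediateField.adjoin ℚ {θ} :=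
    div_mem (add_mem (add_mem (mul_mem hmem hθm) hmem) (one_mem _)) (sub_mem hθm hmem)
  have hτt : τ t = t := by
    rw [ht, map_div₀, map_add, map_add, map_mul, map_sub, map_one, hτ, hτw]
    have e1 : -1 / (1 + w) * (-1 / (1 + θ)) + -1 / (1 + w) + 1
        = (w * θ + w + 1) / ((1 + w) * (1 + θ)) := by field_simp; ring
    have e2 : -1 / (1 + θ) - -1 / (1 + w) = (θ - w) / ((1 + w) * (1 + θ)) := by
      field_simp; ring
    rw [e1, e2]
    exact div_div_div_cancel_right₀ (mul_ne_zero w1 h1) _ _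
  have hfix : ∀ ρ : K ≃ₐ[ℚ] K, ρ t = t := by
    intro ρ
    rcases hθ.conj (hθ.map ρ) with e | e | e
    · exact eq_on_adjoin ρ AlgEquiv.refl (by simpa using e) htm
    · rw [eq_on_adjoin ρ τ (by rw [e, hτ]) htm, hτt]
    · rw [eq_on_adjoin ρ (τ.trans τ) ?_ htm, AlgEquiv.trans_apply, hτt, hτt]
      rw [AlgEquiv.trans_apply, e, hτ, map_div₀, map_neg, map_add, map_one, hτ]
      exact (sig_sig' h0 h1).symm
  obtain ⟨q, p, hq, hco', hpq⟩ := rat_of_fixed hfix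
  have hco := hco'.symm
  have hrel : (p : K) * (w * θ + w + 1) = q * (θ - w) := by
    rw [← hpq, ht]; field_simp
  have hws : w * ((p : K) * θ + p + q) = q * θ - p := by linear_combination hrel
  have hid := key_id m N p q θ hθ
  have hz : ((m : K) * (p ^ 3 - m * p ^ 2 * q - (m + 3) * p * q ^ 2 - q ^ 3)
       + (m ^ 2 + 3 * m + 9) * p * q * (p + q)
       - N * (p ^ 3 - m * p ^ 2 * q - (m + 3) * p * q ^ 2 - q ^ 3)) * (θ * (1 + θ)) = 0 := by
    rw [← hws] at hid
    unfold Rt at hw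
    linear_combination hid - ((p : K) * θ + p + q) ^ 3 * hw
  have hz' := (mul_eq_zero.mp hz).resolve_right (mul_ne_zero h0 h1)
  have hZ : N * F m p q = m * F m p q + (m ^ 2 + 3 * m + 9) * p * q * (p + q) := by
    have : ((m * F m p q + (m ^ 2 + 3 * m + 9) * p * q * (p + q) - N * F m p q : ℤ) : K) = 0 := by
      unfold F; push_cast; exact hz'
    have : m * F m p q + (m ^ 2 + 3 * m + 9) * p * q * (p + q) - N * F m p q = 0 := by
      exact_mod_cast this
    linarith
  have hF0 : F m p q ≠ 0 := fun h => hq (F_zero h).1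
  have hnt : p * q * (p + q) ≠ 0 := by
    intro h
    apply hNm
    have : (N - m) * F m p q = 0 := by linear_combination hZ + (m ^ 2 + 3 * m + 9) * h
    have := (mul_eq_zero.mp this).resolve_right hF0
    linarith
  have hdvd : F m p q ∣ m ^ 2 + 3 * m + 9 := by
    have hd : F m p q ∣ (m ^ 2 + 3 * m + 9) * (p * q * (p + q)) :=
      ⟨N - m, by linear_combination -hZ⟩
    have c1 : IsCoprime (F m p q) p := by
      have : IsCoprime (-q ^ 3 + p * (p ^ 2 - m * p * q - (m + 3) * q ^ 2)) p :=
        IsCoprime.add_mul_left_left (hco.symm.pow_left.neg_left) _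
      convert this using 1; unfold F; ring
    have c2 : IsCoprime (F m p q) q := by
      have : IsCoprime (p ^ 3 + q * (-m * p ^ 2 - (m + 3) * p * q - q ^ 2)) q :=
        IsCoprime.add_mul_left_left (hco.pow_left) _
      convert this using 1; unfold F; ring
    have c3 : IsCoprime (F m p q) (p + q) := by
      have hc : IsCoprime p (p + q) := by
        have := IsCoprime.add_mul_left_right hco 1
        rwa [mul_one, add_comm] at this
      have : IsCoprime (-p ^ 3 + (p + q) * (2 * p ^ 2 - (m + 2) * p * q - q ^ 2)) (p + q) :=
        IsCoprime.add_mul_left_left (hc.pow_left.neg_left) _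
      convert this using 1; unfold F; ring
    exact ((c1.mul_right c2).mul_right c3).dvd_of_dvd_mul_right hd
  rcases lt_or_gt_of_ne hF0 with hneg | hpos
  · have hFn : F m (-p) (-q) = -F m p q := by unfold F; ring
    refine ⟨-p, -q, ?_, ?_, ?_, ?_⟩
    · intro h; apply hnt; linear_combination -h
    · rw [hFn]; linarith
    · rw [hFn]; exact (neg_dvd).mpr hdvd
    · rw [hFn]; linear_combination -hZ
  · exact ⟨p, q, hnt, hpos, hdvd, hZ⟩

lemma forward {m n : ℤ} (h1 : n ≠ m) (h2 : n ≠ -m - 3) (hL : L n = L m) :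
    ∃ x y : ℤ, x * y * (x + y) ≠ 0 ∧ 0 < F m x y ∧ F m x y ∣ m ^ 2 + 3 * m + 9 ∧
      (n * F m x y = m * F m x y + (m ^ 2 + 3 * m + 9) * x * y * (x + y) ∨
       (-n - 3) * F m x y = m * F m x y + (m ^ 2 + 3 * m + 9) * x * y * (x + y)) := by
  obtain ⟨θ, hθ⟩ := exists_root m
  obtain ⟨w, hw⟩ := exists_root n
  obtain ⟨τ, hτ⟩ := exists_tau hθ
  rw [L_eq hθ, L_eq hw] at hL
  have hmem : w ∈ IntermediateField.adjoin ℚ {θ} := by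
    rw [← hL]; exact IntermediateField.mem_adjoin_simple_self ℚ w
  have hmem' : θ ∈ IntermediateField.adjoin ℚ {w} := by
    rw [hL]; exact IntermediateField.mem_adjoin_simple_self ℚ θ
  have w0 := hw.ne_zero
  rcases hw.conj (hw.map τ) with e | e | e
  · exfalso
    have := eq_on_adjoin τ AlgEquiv.refl (by simpa using e) hmem'
    rw [hτ] at this
    exact sig_ne hθ this
  · obtain ⟨x, y, a, b, c, d⟩ := core hθ hw h1 hmem τ hτ e
    exact ⟨x, y, a, b, c, Or.inl d⟩
  · have hw' : Rt (-n - 3) w⁻¹ := by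
      unfold Rt at *
      push_cast
      field_simp
      linear_combination -hw
    have e' : τ w⁻¹ = -1 / (1 + w⁻¹) := by
      rw [map_inv₀, e]
      have := hw.ne_one
      have h3 : 1 + w⁻¹ = (1 + w) / w := by field_simp; ring
      rw [h3]
      rw [inv_div, div_div_eq_mul_div, div_neg, neg_one_mul, neg_div]
    obtain ⟨x, y, a, b, c, d⟩ := core hθ hw' (fun h => h2 (by linarith)) (inv_mem hmem) τ hτ e'
    exact ⟨x, y, a, b, c, Or.inr d⟩

theorem stmt0 (m : ℤ) :
    ((∃ n : ℤ, n ≠ m ∧ n ≠ -m - 3 ∧ L n = L m) ↔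
      ∃ x y : ℤ, x * y * (x + y) ≠ 0 ∧ 0 < F m x y ∧ F m x y ∣ m ^ 2 + 3 * m + 9) ∧
    ((∃ n : ℤ, n ≠ m ∧ n ≠ -m - 3 ∧ L n = L m) →
      ∃ n x y : ℤ, n ≠ m ∧ n ≠ -m - 3 ∧ L n = L m ∧
        x * y * (x + y) ≠ 0 ∧ 0 < F m x y ∧ F m x y ∣ m ^ 2 + 3 * m + 9 ∧
        Xor'
          (n * F m x y = m * F m x y + (m ^ 2 + 3 * m + 9) * x * y * (x + y))
          ((-n - 3) * F m x y = m * F m x y + (m ^ 2 + 3 * m + 9) * x * y * (x + y))) := by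
  refine ⟨⟨?_, ?_⟩, ?_⟩
  · rintro ⟨n, h1, h2, hL⟩
    obtain ⟨x, y, a, b, c, -⟩ := forward h1 h2 hL
    exact ⟨x, y, a, b, c⟩
  · rintro ⟨x, y, hnt, hpos, k, hk⟩
    have hx : x ≠ 0 := by rintro rfl; simp at hnt
    have hk0 : k ≠ 0 := by
      rintro rfl; have := D_pos m; rw [hk] at this; simp at this
    have hN : (m + k * (x * y * (x + y))) * F m x y
        = m * F m x y + (m ^ 2 + 3 * m + 9) * x * y * (x + y) := by
      rw [hk]; ring
    refine ⟨m + k * (x * y * (x + y)), ?_, ?_, L_eq_of_sol hx hN⟩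
    · intro h
      exact mul_ne_zero hk0 hnt (by linarith)
    · intro h
      rw [h] at hN
      exact hx (G_zero hN).1
  · rintro ⟨n, h1, h2, hL⟩
    obtain ⟨x, y, a, b, c, d⟩ := forward h1 h2 hL
    refine ⟨n, x, y, h1, h2, hL, a, b, c, ?_⟩
    have hnot : ¬ (n * F m x y = (-n - 3) * F m x y) := by
      intro h
      have := mul_right_cancel₀ b.ne' h
      omega
    rcases d with d | d
    · exact Or.inl ⟨d, fun h => hnot (d.trans h.symm)⟩
    · exact Or.inr ⟨d, fun h => hnot (h.trans d.symm)⟩
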